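/- arXiv:1707.07748 — 5 statements merged into one kernel-verified Lean document; each statement's English description precedes it below -/
import Mathlib

section
/- For distinct primes p > q, the set G₁ = {(x₁,y₁,z₁,x₂,y₂,z₂) ∈ G×G : q·x₁ = p·x₂ and q·y₁ = p·y₂} is a closed subgroup of G×G, and the quotient space G₁/Γ₁, where Γ₁ = G₁ ∩ (Γ×Γ), is compact. -/
set_option linter.unreachableTactic false
set_option linter.unusedTactic false

noncomputable section
open Filter

/-- The generalized Heisenberg group: `ℝ³` with multiplication
`(x,y,z)·(x',y',z') = (x+x', y+y', z+z'+c(xy'−x'y))`.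
The Heisenberg group `G` of the paper is `Heis 1`. -/
@[ext]
structure Heis (c : ℤ) where
  x : ℝ
  y : ℝ
  z : ℝ

namespace Heis
variable {c : ℤ}
instance : Mul (Heis c) :=
  ⟨fun a b => ⟨a.x + b.x, a.y + b.y, a.z + b.z + (c : ℝ) * (a.x * b.y - b.x * a.y)⟩⟩
instance : One (Heis c) := ⟨⟨0, 0, 0⟩⟩
instance : Inv (Heis c) := ⟨fun a => ⟨-a.x, -a.y, -a.z⟩⟩
lemma mul_def (a b : Heis c) :
    a * b = ⟨a.x + b.x, a.y + b.y, a.z + b.z + (c : ℝ) * (a.x * b.y - b.x * a.y)⟩ := rfl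
lemma one_def : (1 : Heis c) = ⟨0, 0, 0⟩ := rfl
lemma inv_def (a : Heis c) : a⁻¹ = ⟨-a.x, -a.y, -a.z⟩ := rfl
instance : Group (Heis c) where
  mul_assoc a b d := by ext <;> simp [mul_def] <;> ring
  one_mul a := by ext <;> simp [mul_def, one_def]
  mul_one a := by ext <;> simp [mul_def, one_def]
  inv_mul_cancel a := by ext <;> simp [mul_def, one_def, inv_def] <;> ring
/-- The topology of `Heis c`, induced from `ℝ³`. -/
instance : TopologicalSpace (Heis c) :=
  TopologicalSpace.induced (fun a => (a.x, a.y, a.z)) inferInstance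
/-- The lattice of integer points of `Heis c`  (the subgroup `Γ` when `c = 1`). -/
def latt (c : ℤ) : Subgroup (Heis c) where
  carrier := {a | ∃ m n k : ℤ, a = ⟨(m : ℝ), (n : ℝ), (k : ℝ)⟩}
  one_mem' := ⟨0, 0, 0, by ext <;> simp [one_def]⟩
  mul_mem' := by
    rintro a b ⟨m, n, k, rfl⟩ ⟨m', n', k', rfl⟩
    exact ⟨m + m', n + n', k + k' + c * (m * n' - m' * n), by
      ext <;> simp [mul_def] <;> push_cast <;> ring⟩
  inv_mem' := by
    rintro a ⟨m, n, k, rfl⟩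
    exact ⟨-m, -n, -k, by ext <;> simp [inv_def]⟩
end Heis

/-- The 3-dimensional Heisenberg nilmanifold `X = G/Γ` (the space of left cosets,
with the quotient topology). -/
abbrev HeisX : Type := Heis 1 ⧸ Heis.latt 1

/-- The circle `𝕋¹ = ℝ/ℤ`. -/
abbrev T1 : Type := AddCircle (1 : ℝ)

/-- The subgroup `G₁ = {(x₁,y₁,z₁,x₂,y₂,z₂) ∈ G×G : q(x₁,y₁) = p(x₂,y₂)}` of `G × G`. -/
def HeisG1 (p q : ℕ) : Subgroup (Heis 1 × Heis 1) where
  carrier := {g | (q : ℝ) * g.1.x = (p : ℝ) * g.2.x ∧ (q : ℝ) * g.1.y = (p : ℝ) * g.2.y}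
  one_mem' := by simp [Heis.one_def, Prod.fst_one, Prod.snd_one]
  mul_mem' := by
    rintro a b ⟨ha1, ha2⟩ ⟨hb1, hb2⟩
    constructor <;> simp only [Prod.fst_mul, Prod.snd_mul, Heis.mul_def] <;> ring_nf <;>
      nlinarith [ha1, ha2, hb1, hb2]
  inv_mem' := by
    rintro a ⟨ha1, ha2⟩
    constructor <;> simp only [Prod.fst_inv, Prod.snd_inv, Heis.inv_def] <;> nlinarith [ha1, ha2]

lemma Heis.continuous_mk_aux {c : ℤ} {X : Type*} [TopologicalSpace X] {f g h : X → ℝ}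
    (hf : Continuous f) (hg : Continuous g) (hh : Continuous h) :
    Continuous (fun a => (⟨f a, g a, h a⟩ : Heis c)) :=
  continuous_induced_rng.2 (hf.prodMk (hg.prodMk hh))

lemma Heis.continuous_xyz {c : ℤ} : Continuous (fun a : Heis c => (a.x, a.y, a.z)) :=
  continuous_induced_dom

lemma Heis.continuous_x {c : ℤ} : Continuous (fun a : Heis c => a.x) :=
  continuous_fst.comp Heis.continuous_xyz

lemma Heis.continuous_y {c : ℤ} : Continuous (fun a : Heis c => a.y) :=
  (continuous_fst.comp continuous_snd).comp Heis.continuous_xyz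

/-- Parametrization of `G₁` by `ℝ⁴`. -/
def G1param (p q : ℕ) (s t u v : ℝ) : HeisG1 p q :=
  ⟨(⟨p * s, p * t, u⟩, ⟨q * s, q * t, v⟩), by
    constructor <;> dsimp only <;> ring⟩

lemma G1param_surj (p q : ℕ) (hp : p ≠ 0) (g : HeisG1 p q) :
    ∃ s t u v : ℝ, g = G1param p q s t u v := by
  obtain ⟨⟨⟨x, y, z⟩, ⟨x', y', z'⟩⟩, h1, h2⟩ := g
  have hp' : (p : ℝ) ≠ 0 := by exact_mod_cast hp
  dsimp only at h1 h2
  refine ⟨x / p, y / p, z, z', ?_⟩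
  apply Subtype.ext
  refine Prod.ext (Heis.ext ?_ ?_ rfl) (Heis.ext ?_ ?_ rfl) <;> dsimp only [G1param] <;>
    field_simp <;> linarith

lemma G1param_mul (p q : ℕ) (s t u v s' t' u' v' : ℝ) :
    G1param p q s t u v * G1param p q s' t' u' v' =
      G1param p q (s + s') (t + t') (u + u' + (p : ℝ) ^ 2 * (s * t' - s' * t))
        (v + v' + (q : ℝ) ^ 2 * (s * t' - s' * t)) := by
  apply Subtype.ext
  refine Prod.ext (Heis.ext ?_ ?_ ?_) (Heis.ext ?_ ?_ ?_) <;>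
    simp [G1param, Heis.mul_def] <;> ring

lemma G1param_mem (p q : ℕ) (m n k l : ℤ) :
    G1param p q m n k l ∈ ((Heis.latt 1).prod (Heis.latt 1)).subgroupOf (HeisG1 p q) := by
  rw [Subgroup.mem_subgroupOf, Subgroup.mem_prod]
  exact ⟨⟨p * m, p * n, k, by ext <;> simp [G1param]⟩,
    ⟨q * m, q * n, l, by ext <;> simp [G1param]⟩⟩

lemma exists_int_add_mem (r : ℝ) : ∃ k : ℤ, r + k ∈ Set.Icc (0 : ℝ) 1 :=
  ⟨-⌊r⌋, by push_cast; linarith [Int.floor_le r],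
    by push_cast; linarith [Int.lt_floor_add_one r]⟩

/-- For distinct primes `p > q`, the set
`G₁ = {(x₁,y₁,z₁,x₂,y₂,z₂) ∈ G×G : q·x₁ = p·x₂, q·y₁ = p·y₂}` is a closed subgroup of
`G×G`, and `G₁/Γ₁` is compact, where `Γ₁ = G₁ ∩ (Γ×Γ)`. -/
theorem stmt3 (p q : ℕ) (hp : p.Prime) (hq : q.Prime) (hpq : q < p) :
    IsClosed ((HeisG1 p q : Subgroup (Heis 1 × Heis 1)) : Set (Heis 1 × Heis 1)) ∧
      CompactSpace
        ((HeisG1 p q) ⧸ (((Heis.latt 1).prod (Heis.latt 1)).subgroupOf (HeisG1 p q))) := by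
  constructor
  · have hx1 : Continuous (fun g : Heis 1 × Heis 1 => g.1.x) :=
      Heis.continuous_x.comp continuous_fst
    have hx2 : Continuous (fun g : Heis 1 × Heis 1 => g.2.x) :=
      Heis.continuous_x.comp continuous_snd
    have hy1 : Continuous (fun g : Heis 1 × Heis 1 => g.1.y) :=
      Heis.continuous_y.comp continuous_fst
    have hy2 : Continuous (fun g : Heis 1 × Heis 1 => g.2.y) :=
      Heis.continuous_y.comp continuous_snd
    exact (isClosed_eq (continuous_const.mul hx1) (continuous_const.mul hx2)).inter
      (isClosed_eq (continuous_const.mul hy1) (continuous_const.mul hy2))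
  · let I := Set.Icc (0 : ℝ) 1
    let F : I × I × I × I →
        ((HeisG1 p q) ⧸ (((Heis.latt 1).prod (Heis.latt 1)).subgroupOf (HeisG1 p q))) :=
      fun a => QuotientGroup.mk (G1param p q a.1 a.2.1 a.2.2.1 a.2.2.2)
    have hF : Continuous F := by
      refine continuous_quotient_mk'.comp (Continuous.subtype_mk (Continuous.prodMk ?_ ?_) _) <;>
        apply Heis.continuous_mk_aux <;> fun_prop
    refine Function.Surjective.compactSpace (f := F) hF ?_
    intro b
    obtain ⟨g, rfl⟩ := QuotientGroup.mk_surjective b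
    obtain ⟨s, t, u, v, rfl⟩ := G1param_surj p q hp.ne_zero g
    obtain ⟨m, hm⟩ := exists_int_add_mem s
    obtain ⟨n, hn⟩ := exists_int_add_mem t
    obtain ⟨k, hk⟩ := exists_int_add_mem (u + (p : ℝ) ^ 2 * (s * n - m * t))
    obtain ⟨l, hl⟩ := exists_int_add_mem (v + (q : ℝ) ^ 2 * (s * n - m * t))
    refine ⟨⟨⟨_, hm⟩, ⟨_, hn⟩, ⟨_, hk⟩, ⟨_, hl⟩⟩, ?_⟩
    rw [← QuotientGroup.mk_mul_of_mem (G1param p q s t u v) (G1param_mem p q m n k l),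
      G1param_mul, add_right_comm u (k : ℝ), add_right_comm v (l : ℝ)]
end
end

section
/- Let x₀ = Γ be the identity coset in X and let p > q be distinct primes. For every n ∈ ℕ, the pair (T^{pn}x₀, T^{qn}x₀) ∈ X×X lies in the image of G₁ = {(x₁,y₁,z₁,x₂,y₂,z₂) ∈ G×G : q·x₁ = p·x₂ and q·y₁ = p·y₂} under the natural projection G×G → X×X. -/
set_option linter.unreachableTactic false
set_option linter.unusedTactic false

noncomputable section
open Filter

/-- Let `x₀ = Γ` be the identity coset of `X` and `p > q` distinct primes.
For every `n ∈ ℕ`, the pair `(T^{pn}x₀, T^{qn}x₀)` lies in the image of `G₁` under the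
natural projection `G×G → X×X`. -/
theorem stmt4
    (α β : ℝ) (h : T1 × T1 → T1) (hcont : Continuous h)
    (T : HeisX → HeisX)
    (hT : ∀ x y z r : ℝ, (r : T1) = h ((x : T1), (y : T1)) →
      T (QuotientGroup.mk (⟨x, y, z⟩ : Heis 1)) =
        QuotientGroup.mk ((⟨α, β, r⟩ : Heis 1) * ⟨x, y, z⟩))
    (x₀ : HeisX) (hx₀ : x₀ = QuotientGroup.mk (1 : Heis 1))
    (p q : ℕ) (hp : p.Prime) (hq : q.Prime) (hpq : q < p) (n : ℕ) :
    ∃ g ∈ HeisG1 p q,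
      (QuotientGroup.mk g.1 : HeisX) = T^[p * n] x₀ ∧
      (QuotientGroup.mk g.2 : HeisX) = T^[q * n] x₀ := by
  have key : ∀ m : ℕ, ∃ z : ℝ,
      (QuotientGroup.mk (⟨m * α, m * β, z⟩ : Heis 1) : HeisX) = T^[m] x₀ := by
    intro m
    induction m with
    | zero => exact ⟨0, by simp [hx₀, Heis.one_def]⟩
    | succ k ih =>
      obtain ⟨z, hz⟩ := ih
      obtain ⟨r, hr⟩ := QuotientAddGroup.mk_surjective
        (h (((k * α : ℝ) : T1), ((k * β : ℝ) : T1)))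
      refine ⟨((⟨α, β, r⟩ : Heis 1) * ⟨k * α, k * β, z⟩).z, ?_⟩
      · rw [Function.iterate_succ_apply', ← hz, hT _ _ _ r hr, Heis.mul_def]
        congr 2
        · push_cast; ring
        · push_cast; ring
  obtain ⟨z₁, h₁⟩ := key (p * n)
  obtain ⟨z₂, h₂⟩ := key (q * n)
  refine ⟨(_, _), ⟨?_, ?_⟩, h₁, h₂⟩
  · push_cast; ring
  · push_cast; ring
end
end

section
/- Let p > q be distinct primes and let f : X → ℂ be continuous with vertical oscillation of frequency ξ for some nonzero integer ξ. Then ∫_{[0,1)⁴} f((px, py, z₁)Γ) · conj(f((qx, qy, z₂)Γ)) dx dy dz₁ dz₂ = 0. -/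
set_option linter.unreachableTactic false
set_option linter.unusedTactic false

noncomputable section
open Filter

open MeasureTheory

/-- A continuous `f : X → ℂ` has vertical oscillation of frequency `ξ ∈ ℤ` if
`f((0,0,z)·τ) = e^{2πiξz}·f(τ)` for every `τ ∈ X` and `z ∈ ℝ`. -/
def VerticalOsc (ξ : ℤ) (f : HeisX → ℂ) : Prop :=
  ∀ (τ : HeisX) (z : ℝ),
    f ((⟨0, 0, z⟩ : Heis 1) • τ) =
      Complex.exp (2 * Real.pi * Complex.I * (ξ : ℂ) * (z : ℂ)) * f τ

lemma int_exp_zero (ξ : ℤ) (hξ : ξ ≠ 0) :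
    ∫ z in Set.Ico (0 : ℝ) 1,
      Complex.exp (2 * Real.pi * Complex.I * (ξ : ℂ) * (z : ℂ)) = 0 := by
  have hc : (2 * Real.pi * Complex.I * (ξ : ℂ)) ≠ 0 :=
    mul_ne_zero Complex.two_pi_I_ne_zero (by exact_mod_cast hξ)
  rw [integral_Ico_eq_integral_Ioc, ← intervalIntegral.integral_of_le zero_le_one,
    integral_exp_mul_complex hc]
  have h1 : Complex.exp (2 * Real.pi * Complex.I * (ξ : ℂ)) = 1 := by
    rw [mul_comm]; exact Complex.exp_int_mul_two_pi_mul_I ξ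
  simp [h1]

lemma osc_eq (ξ : ℤ) (f : HeisX → ℂ) (hosc : VerticalOsc ξ f) (a b z : ℝ) :
    f (QuotientGroup.mk (⟨a, b, z⟩ : Heis 1)) =
      Complex.exp (2 * Real.pi * Complex.I * (ξ : ℂ) * (z : ℂ)) *
        f (QuotientGroup.mk (⟨a, b, 0⟩ : Heis 1)) := by
  rw [← hosc]
  have h : (⟨a, b, z⟩ : Heis 1) = ⟨0, 0, z⟩ * ⟨a, b, 0⟩ := by
    ext <;> simp [Heis.mul_def]
  rw [h]
  rfl

/-- If `p > q` are distinct primes and `f : X → ℂ` is continuous with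
vertical oscillation of some nonzero frequency `ξ`, then
`∫_{[0,1)⁴} f((px,py,z₁)Γ)·conj(f((qx,qy,z₂)Γ)) dx dy dz₁ dz₂ = 0`. -/
theorem stmt9
    (p q : ℕ) (hp : p.Prime) (hq : q.Prime) (hpq : q < p)
    (ξ : ℤ) (hξ : ξ ≠ 0) (f : HeisX → ℂ) (hf : Continuous f) (hosc : VerticalOsc ξ f) :
    ∫ x in Set.Ico (0 : ℝ) 1, ∫ y in Set.Ico (0 : ℝ) 1, ∫ z₁ in Set.Ico (0 : ℝ) 1,
      ∫ z₂ in Set.Ico (0 : ℝ) 1,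
        f (QuotientGroup.mk (⟨p * x, p * y, z₁⟩ : Heis 1)) *
          (starRingEnd ℂ) (f (QuotientGroup.mk (⟨q * x, q * y, z₂⟩ : Heis 1))) = 0 := by
  have key : ∀ a b : ℝ, ∫ z₂ in Set.Ico (0 : ℝ) 1,
      (starRingEnd ℂ) (f (QuotientGroup.mk (⟨a, b, z₂⟩ : Heis 1))) = 0 := by
    intro a b
    rw [integral_conj]
    rw [integral_congr_ae (Filter.Eventually.of_forall fun z => osc_eq ξ f hosc a b z),
      integral_mul_const, int_exp_zero ξ hξ]
    simp
  simp_rw [integral_const_mul, key]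
  simp
end
end

section
/- T is uniquely ergodic (there is exactly one T-invariant Borel probability measure on Ω) if and only if for every integer k ≥ 1 there is no Borel measurable function R : Ω₀ → 𝕋¹ satisfying R(T₀ω₀) = R(ω₀) + k·g(ω₀) for γ₀-almost every ω₀ ∈ Ω₀. -/
noncomputable section
open MeasureTheory Filter

/-- A finite-measure functional on continuous functions. -/
def intCLM (ν : Measure T1) [IsProbabilityMeasure ν] : C(T1, ℂ) →L[ℂ] ℂ :=
  LinearMap.mkContinuous
    { toFun := fun f => ∫ x, f x ∂ν
      map_add' := fun f h => by
        have hi : ∀ f : C(T1, ℂ), Integrable f ν := fun f =>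
          Integrable.of_bound f.continuous.aestronglyMeasurable ‖f‖
            (Eventually.of_forall f.norm_coe_le_norm)
        simpa using integral_add (hi f) (hi h)
      map_smul' := fun c f => by simp [integral_const_mul] } 1
    (fun f => by
      have := norm_integral_le_of_norm_le_const (μ := ν) (f := f) (C := ‖f‖)
        (Eventually.of_forall f.norm_coe_le_norm)
      simpa using this)

lemma eq_haar (ν : Measure T1) [IsProbabilityMeasure ν]
    (h : ∀ k : ℕ, 1 ≤ k → ∫ x, fourier (k : ℤ) x ∂ν = 0) :
    ν = AddCircle.haarAddCircle := by
  have h0 : ∀ k : ℤ, k ≠ 0 → ∫ x, fourier k x ∂ν = 0 := by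
    intro k hk
    rcases lt_or_gt_of_ne hk with hk | hk
    · have := h k.natAbs (by omega)
      have e : ((k.natAbs : ℕ) : ℤ) = -k := by omega
      rw [e] at this
      simp only [fourier_neg] at this
      rw [integral_conj] at this
      simpa using this
    · have := h k.natAbs (by omega)
      have e : ((k.natAbs : ℕ) : ℤ) = k := by omega
      rwa [e] at this
  have h1 : ∀ k : ℤ, k ≠ 0 → ∫ x, fourier k x ∂(AddCircle.haarAddCircle : Measure T1) = 0 := by
    intro k hk
    have := congrFun (fourierCoeff_fourier (T := 1) k) 0
    rw [Pi.single_eq_of_ne hk.symm] at this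
    simpa [fourierCoeff] using this
  have key : intCLM ν = intCLM AddCircle.haarAddCircle := by
    apply ContinuousLinearMap.ext_on (s := Set.range (@fourier 1))
    · rw [← Submodule.dense_iff_topologicalClosure_eq_top.symm]
      exact span_fourier_closure_eq_top
    · rintro _ ⟨k, rfl⟩
      change ∫ x, fourier k x ∂ν = ∫ x, fourier k x ∂(AddCircle.haarAddCircle : Measure T1)
      by_cases hk : k = 0
      · subst hk; simp
      · rw [h0 k hk, h1 k hk]
  apply ext_of_forall_integral_eq_of_IsFiniteMeasure
  intro f
  have := DFunLike.congr_fun key ⟨fun x => (f x : ℂ), by fun_prop⟩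
  change ∫ x, (f x : ℂ) ∂ν = ∫ x, (f x : ℂ) ∂(AddCircle.haarAddCircle : Measure T1) at this
  rw [integral_complex_ofReal, integral_complex_ofReal] at this
  exact_mod_cast this

/-- Uniqueness gives ergodicity. -/
lemma zero_or_one {X : Type*} [MeasurableSpace X] (S : X → X) (hS : Measurable S)
    (μ : Measure X) [IsProbabilityMeasure μ] (hinv : μ.map S = μ)
    (huniq : ∀ ν : Measure X, IsProbabilityMeasure ν → ν.map S = ν → ν = μ)
    (A : Set X) (hA : MeasurableSet A) (hinvA : ∀ᵐ x ∂μ, (S x ∈ A ↔ x ∈ A)) (h0 : μ A ≠ 0) :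
    ∀ᵐ x ∂μ, x ∈ A := by
  have hp := ProbabilityTheory.cond_isProbabilityMeasure (μ := μ) h0
  have hA' : (S ⁻¹' A : Set X) =ᵐ[μ] A := by
    filter_upwards [hinvA] with x hx
    exact propext hx
  have hr : (μ.restrict A).map S = μ.restrict A := by
    rw [← Measure.restrict_congr_set hA', ← Measure.restrict_map hS hA, hinv,
      Measure.restrict_congr_set hA']
  have hm : (ProbabilityTheory.cond μ A).map S = ProbabilityTheory.cond μ A := by
    rw [ProbabilityTheory.cond, Measure.map_smul, hr]
  have := huniq _ hp hm
  rw [← this]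
  exact ProbabilityTheory.ae_cond_mem hA

/-- Normalised argument as an element of the circle. -/
def argT (z : ℂ) : T1 := ((Complex.arg z / (2 * Real.pi) : ℝ) : T1)

lemma measurable_argT : Measurable argT := by
  unfold argT
  exact (AddCircle.measurable_mk' (a := (1:ℝ))).comp (Complex.measurable_arg.div_const _)

lemma toCircle_argT (z : ℂ) (hz : z ≠ 0) :
    ((argT z).toCircle : ℂ) * ‖z‖ = z := by
  unfold argT
  rw [AddCircle.toCircle_apply_mk, Circle.coe_exp]
  conv_rhs => rw [← Complex.norm_mul_exp_arg_mul_I z]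
  rw [mul_comm]
  congr 3
  push_cast
  field_simp

lemma argT_mul (x : T1) (z : ℂ) (hz : z ≠ 0) : argT ((x.toCircle : ℂ) * z) = argT z + x := by
  apply AddCircle.injective_toCircle (one_ne_zero)
  apply Subtype.ext
  have h1 := toCircle_argT z hz
  have h2 := toCircle_argT ((x.toCircle : ℂ) * z) (mul_ne_zero (by simp) hz)
  rw [norm_mul, Circle.norm_coe, one_mul] at h2
  have hn : (‖z‖ : ℂ) ≠ 0 := by simpa using hz
  apply mul_right_cancel₀ hn
  change (((argT ((x.toCircle : ℂ) * z)).toCircle : Circle) : ℂ) * _ =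
    (((argT z + x).toCircle : Circle) : ℂ) * _
  rw [h2, AddCircle.toCircle_add, Circle.coe_mul]
  linear_combination -(x.toCircle : ℂ) * h1

lemma prod_inv {Ω₀ : Type*} [MeasurableSpace Ω₀]
    (T₀ : Ω₀ → Ω₀) (hT₀ : Measurable T₀)
    (γ₀ : Measure Ω₀) [IsProbabilityMeasure γ₀] (hinv : γ₀.map T₀ = γ₀)
    (g : Ω₀ → T1) (hg : Measurable g) :
    (γ₀.prod (AddCircle.haarAddCircle : Measure T1)).map
      (fun ω : Ω₀ × T1 => (T₀ ω.1, ω.2 + g ω.1)) = γ₀.prod AddCircle.haarAddCircle := by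
  refine (MeasurePreserving.skew_product (f := T₀) (g := fun a b => b + g a)
    ⟨hT₀, hinv⟩ ?_ ?_).map_eq
  · fun_prop
  · exact Eventually.of_forall fun a => map_add_right_eq_self _ _

lemma half_ball (y : T1) (k : ℕ) (hk : 1 ≤ k) :
    (AddCircle.haarAddCircle : Measure T1) {ζ | k • ζ - y ∈ Metric.closedBall (0 : T1) (1/4)}
      = ENNReal.ofReal (1/2) := by
  have hv : (AddCircle.haarAddCircle : Measure T1) = volume := by
    simp [AddCircle.volume_eq_smul_haarAddCircle]
  have mp1 : MeasurePreserving (fun ζ : T1 => (k : ℤ) • ζ) AddCircle.haarAddCircle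
      AddCircle.haarAddCircle := Measure.measurePreserving_zsmul _ (by omega)
  have mp2 : MeasurePreserving (fun ζ : T1 => ζ - y) AddCircle.haarAddCircle
      AddCircle.haarAddCircle := measurePreserving_sub_right _ y
  have := (mp2.comp mp1).measure_preimage
    (s := Metric.closedBall (0 : T1) (1/4)) Metric.isClosed_closedBall.measurableSet.nullMeasurableSet
  rw [show {ζ : T1 | k • ζ - y ∈ Metric.closedBall (0 : T1) (1/4)} =
    ((fun ζ : T1 => ζ - y) ∘ (fun ζ : T1 => (k : ℤ) • ζ)) ⁻¹' Metric.closedBall (0 : T1) (1/4)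
    by ext; simp, this, hv, AddCircle.volume_closedBall]
  norm_num

/-- The Fourier coefficient argument. -/
lemma coeff_zero {Ω₀ : Type*} [MeasurableSpace Ω₀]
    (T₀ : Ω₀ → Ω₀) (hT₀ : Measurable T₀)
    (γ₀ : Measure Ω₀) [IsProbabilityMeasure γ₀] (hinv : γ₀.map T₀ = γ₀)
    (huniq : ∀ μ : Measure Ω₀, IsProbabilityMeasure μ → μ.map T₀ = μ → μ = γ₀)
    (g : Ω₀ → T1) (hg : Measurable g) (κ : ProbabilityTheory.Kernel Ω₀ T1)
    [ProbabilityTheory.IsMarkovKernel κ]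
    (hμ : (γ₀.compProd κ).map (fun ω : Ω₀ × T1 => (T₀ ω.1, ω.2 + g ω.1)) = γ₀.compProd κ)
    (k : ℕ)
    (hR : ¬ ∃ R : Ω₀ → T1, Measurable R ∧ ∀ᵐ ω₀ ∂γ₀, R (T₀ ω₀) = R ω₀ + k • g ω₀) :
    ∀ᵐ ω ∂γ₀, ∫ x, fourier (k : ℤ) x ∂(κ ω) = 0 := by
  set h : Ω₀ → ℂ := fun ω => ∫ x, fourier (k : ℤ) x ∂(κ ω) with hh
  have hhm : Measurable h :=
    (StronglyMeasurable.integral_kernel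
      (fourier (k : ℤ)).continuous.stronglyMeasurable).measurable
  have fb : ∀ x : T1, ‖fourier (k : ℤ) x‖ ≤ 1 := fun x =>
    (Circle.norm_coe _).le
  have hb : ∀ ω, ‖h ω‖ ≤ 1 := fun ω => by
    have := norm_integral_le_of_norm_le_const (μ := κ ω) (f := fourier (k : ℤ)) (C := 1)
        (Eventually.of_forall fb)
    rwa [probReal_univ, mul_one] at this
  set u : Ω₀ → ℂ := fun ω => fourier (k : ℤ) (g ω) with hu
  have hum : Measurable u := (fourier (k : ℤ)).continuous.measurable.comp hg
  have hub : ∀ ω, ‖u ω‖ = 1 := fun ω => Circle.norm_coe _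
  -- general integration formula
  have form : ∀ f : Ω₀ → ℂ, Measurable f → (∀ ω, ‖f ω‖ ≤ 1) →
      ∫ p, f p.1 * fourier (k : ℤ) p.2 ∂(γ₀.compProd κ) = ∫ ω, f ω * h ω ∂γ₀ := by
    intro f hf hfb
    rw [Measure.integral_compProd]
    · simp only [integral_const_mul, hh]
    · refine Integrable.of_bound (C := 1) ?_ (Eventually.of_forall fun p => ?_)
      · exact ((hf.comp measurable_fst).mul
          ((fourier (k : ℤ)).continuous.measurable.comp measurable_snd)).aestronglyMeasurable
      · rw [norm_mul]
        exact mul_le_one₀ (hfb _) (norm_nonneg _) (fb _)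
  have cm : Measurable (fun z : ℂ => (starRingEnd ℂ) z) := Complex.continuous_conj.measurable
  have e1 := form (fun ω => (starRingEnd ℂ) (h ω)) (cm.comp hhm) (by simpa using hb)
  have e2 := form (fun ω => (starRingEnd ℂ) (h (T₀ ω)) * u ω)
    ((cm.comp (hhm.comp hT₀)).mul hum) (fun ω => by
      rw [norm_mul, hub, mul_one]; simpa using hb _)
  have e3 : ∫ p, (starRingEnd ℂ) (h p.1) * fourier (k : ℤ) p.2 ∂(γ₀.compProd κ) =
      ∫ p, (starRingEnd ℂ) (h (T₀ p.1)) * u p.1 * fourier (k : ℤ) p.2 ∂(γ₀.compProd κ) := by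
    conv_lhs => rw [← hμ]
    rw [integral_map]
    · apply integral_congr_ae
      refine Eventually.of_forall fun p => ?_
      simp only [hu, fourier_apply, smul_add, AddCircle.toCircle_add, Circle.coe_mul]
      ring
    · exact (Measurable.aemeasurable (by fun_prop))
    · exact (((cm.comp hhm).comp measurable_fst).mul
          ((fourier (k : ℤ)).continuous.measurable.comp measurable_snd)).aestronglyMeasurable
  have e4 : ∫ ω, (starRingEnd ℂ) (h (T₀ ω)) * u ω * h ω ∂γ₀ =
      ∫ ω, (starRingEnd ℂ) (h ω) * h ω ∂γ₀ := by rw [← e2, ← e3, e1]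
  have hsq : ∀ z : ℂ, (starRingEnd ℂ) z * z = ((‖z‖ ^ 2 : ℝ) : ℂ) := fun z => by
    rw [mul_comm, Complex.mul_conj, Complex.normSq_eq_norm_sq]
  have bint : ∀ f : Ω₀ → ℝ, Measurable f → (∀ ω, ‖f ω‖ ≤ 1) → Integrable f γ₀ :=
    fun f hf hfb => Integrable.of_bound hf.aestronglyMeasurable 1 (Eventually.of_forall hfb)
  have i1 : Integrable (fun ω => ‖h ω‖ ^ 2) γ₀ := bint _ (by fun_prop) (fun ω => by
    rw [Real.norm_of_nonneg (by positivity)]; exact pow_le_one₀ (norm_nonneg _) (hb _))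
  have i2 : Integrable (fun ω => ‖h (T₀ ω)‖ ^ 2) γ₀ := bint _ (by fun_prop) (fun ω => by
    rw [Real.norm_of_nonneg (by positivity)]; exact pow_le_one₀ (norm_nonneg _) (hb _))
  have i3 : Integrable (fun ω => (starRingEnd ℂ) (h (T₀ ω)) * u ω * h ω) γ₀ :=
    Integrable.of_bound (((cm.comp (hhm.comp hT₀)).mul hum).mul hhm).aestronglyMeasurable 1
      (Eventually.of_forall fun ω => by
        rw [norm_mul, norm_mul, hub, mul_one]
        exact mul_le_one₀ (by simpa using hb _) (norm_nonneg _) (hb _))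
  have e5 : ∫ ω, ((starRingEnd ℂ) (h (T₀ ω)) * u ω * h ω).re ∂γ₀ = ∫ ω, ‖h ω‖ ^ 2 ∂γ₀ := by
    have a := integral_re i3
    simp only [RCLike.re_to_complex] at a
    rw [a, e4]
    simp only [hsq]
    rw [integral_complex_ofReal, Complex.ofReal_re]
  have e6 : ∫ ω, ‖h (T₀ ω)‖ ^ 2 ∂γ₀ = ∫ ω, ‖h ω‖ ^ 2 ∂γ₀ := by
    conv_rhs => rw [← hinv]
    rw [integral_map hT₀.aemeasurable]
    exact Measurable.aestronglyMeasurable (by fun_prop)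
  have pt : ∀ ω, ‖h (T₀ ω) - u ω * h ω‖ ^ 2 = ‖h (T₀ ω)‖ ^ 2 + ‖h ω‖ ^ 2
      - 2 * ((starRingEnd ℂ) (h (T₀ ω)) * u ω * h ω).re := by
    intro ω
    have h1 : ‖u ω * h ω‖ ^ 2 = ‖h ω‖ ^ 2 := by rw [norm_mul, hub, one_mul]
    rw [← h1]
    simp only [← Complex.normSq_eq_norm_sq]
    rw [Complex.normSq_sub, ← Complex.conj_re]
    congr 3
    simp
    ring
  have i3r : Integrable (fun ω => ((starRingEnd ℂ) (h (T₀ ω)) * u ω * h ω).re) γ₀ := i3.re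
  have e7 : ∫ ω, ‖h (T₀ ω) - u ω * h ω‖ ^ 2 ∂γ₀ = 0 := by
    simp only [pt]
    have i12 : Integrable (fun ω => ‖h (T₀ ω)‖ ^ 2 + ‖h ω‖ ^ 2) γ₀ := i2.add i1
    rw [integral_sub i12 (i3r.const_mul 2), integral_add i2 i1, integral_const_mul,
      e5, e6]
    ring
  have e8 : ∀ᵐ ω ∂γ₀, h (T₀ ω) = u ω * h ω := by
    have := (integral_eq_zero_iff_of_nonneg (μ := γ₀)
      (f := fun ω => ‖h (T₀ ω) - u ω * h ω‖ ^ 2) (fun ω => by positivity) (by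
        simp only [pt]
        exact (i2.add i1).sub (i3r.const_mul 2))).1 e7
    filter_upwards [this] with ω hω
    simpa [sub_eq_zero] using hω
  by_contra hne
  apply hR
  have hA : MeasurableSet {ω | h ω ≠ 0} := (measurableSet_eq_fun hhm measurable_const).compl
  have full : ∀ᵐ ω ∂γ₀, ω ∈ {ω | h ω ≠ 0} := by
    apply zero_or_one T₀ hT₀ γ₀ hinv huniq _ hA
    · filter_upwards [e8] with ω hω
      have : u ω ≠ 0 := by rw [← norm_ne_zero_iff, hub]; exact one_ne_zero
      simp [hω, this]
    · intro h0
      exact hne (ae_iff.2 h0)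
  refine ⟨fun ω => argT (h ω), measurable_argT.comp hhm, ?_⟩
  filter_upwards [e8, full] with ω h1 h2
  have := argT_mul (k • g ω) (h ω) h2
  rw [h1, ← this]
  simp [hu]

/-- Furstenberg's criterion. Let `T₀ : Ω₀ → Ω₀` be a uniquely ergodic
continuous map of a compact metric space, with unique invariant Borel probability measure
`γ₀`, let `g : Ω₀ → 𝕋¹` be Borel measurable and `T(ω₀,ζ) = (T₀ω₀, ζ + g(ω₀))` the skew
product on `Ω = Ω₀ × 𝕋¹`. Then `T` is uniquely ergodic if and only if for every `k ≥ 1`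
the equation `R(T₀ω₀) = R(ω₀) + k·g(ω₀)` has no Borel measurable solution
`R : Ω₀ → 𝕋¹` modulo `γ₀`. -/
theorem stmt13
    {Ω₀ : Type*} [MetricSpace Ω₀] [CompactSpace Ω₀] [MeasurableSpace Ω₀] [BorelSpace Ω₀]
    (T₀ : Ω₀ → Ω₀) (hT₀ : Continuous T₀)
    (γ₀ : Measure Ω₀) (hprob : IsProbabilityMeasure γ₀) (hinv : γ₀.map T₀ = γ₀)
    (huniq : ∀ μ : Measure Ω₀, IsProbabilityMeasure μ → μ.map T₀ = μ → μ = γ₀)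
    (g : Ω₀ → T1) (hg : Measurable g) :
    (∃! μ : Measure (Ω₀ × T1), IsProbabilityMeasure μ ∧
        μ.map (fun ω : Ω₀ × T1 => (T₀ ω.1, ω.2 + g ω.1)) = μ) ↔
      ∀ k : ℕ, 1 ≤ k →
        ¬ ∃ R : Ω₀ → T1, Measurable R ∧ ∀ᵐ ω₀ ∂γ₀, R (T₀ ω₀) = R ω₀ + k • g ω₀ := by
  have hT₀m := hT₀.measurable
  have hTm : Measurable (fun ω : Ω₀ × T1 => (T₀ ω.1, ω.2 + g ω.1)) := by fun_prop
  have hpi := prod_inv T₀ hT₀m γ₀ hinv g hg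
  constructor
  · rintro ⟨μ, -, hu⟩ k hk ⟨R, hR, hRe⟩
    have hμ := hu _ ⟨inferInstance, hpi⟩
    have hu' : ∀ ν : Measure (Ω₀ × T1), IsProbabilityMeasure ν →
        ν.map (fun ω : Ω₀ × T1 => (T₀ ω.1, ω.2 + g ω.1)) = ν →
        ν = γ₀.prod AddCircle.haarAddCircle :=
      fun ν h1 h2 => (hu ν ⟨h1, h2⟩).trans hμ.symm
    set A : Set (Ω₀ × T1) := {p | k • p.2 - R p.1 ∈ Metric.closedBall (0 : T1) (1/4)} with hA
    have hAm : MeasurableSet A := by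
      have : Measurable (fun p : Ω₀ × T1 => k • p.2 - R p.1) := by fun_prop
      exact this Metric.isClosed_closedBall.measurableSet
    have hmA : (γ₀.prod AddCircle.haarAddCircle) A = ENNReal.ofReal (1/2) := by
      rw [Measure.prod_apply hAm]
      have : ∀ x, (AddCircle.haarAddCircle : Measure T1) (Prod.mk x ⁻¹' A)
          = ENNReal.ofReal (1/2) := fun x => half_ball (R x) k hk
      simp only [this]
      simp
    have hinvA : ∀ᵐ p ∂(γ₀.prod (AddCircle.haarAddCircle : Measure T1)),
        ((T₀ p.1, p.2 + g p.1) ∈ A ↔ p ∈ A) := by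
      have := (Measure.quasiMeasurePreserving_fst
        (μ := γ₀) (ν := (AddCircle.haarAddCircle : Measure T1))).ae hRe
      filter_upwards [this] with p hp
      simp only [hA, Set.mem_ofPred_eq, hp, smul_add, add_sub_add_right_eq_sub]
    have hfull := zero_or_one _ hTm _ hpi hu' A hAm hinvA (by rw [hmA]; simp)
    have h1 := prob_compl_eq_zero_iff hAm |>.1 (ae_iff.1 hfull)
    rw [hmA] at h1
    have := congrArg ENNReal.toReal h1
    norm_num at this
  · intro hno
    refine ⟨γ₀.prod AddCircle.haarAddCircle, ⟨inferInstance, hpi⟩, ?_⟩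
    rintro μ ⟨hμp, hμi⟩
    have hfst : μ.fst = γ₀ := by
      apply huniq _ inferInstance
      conv_rhs => rw [← hμi]
      rw [Measure.fst, Measure.fst, Measure.map_map hT₀m measurable_fst,
        Measure.map_map measurable_fst hTm]
      rfl
    have hdis : γ₀.compProd μ.condKernel = μ := by
      conv_rhs => rw [← Measure.disintegrate μ μ.condKernel, hfst]
    have hall : ∀ᵐ ω ∂γ₀, ∀ k : ℕ, 1 ≤ k → ∫ x, fourier (k : ℤ) x ∂(μ.condKernel ω) = 0 := by
      rw [ae_all_iff]
      intro k
      by_cases hk : 1 ≤ k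
      · filter_upwards [coeff_zero T₀ hT₀m γ₀ hinv huniq g hg μ.condKernel
          (by rw [hdis, hμi]) k (hno k hk)] with ω hω _ using hω
      · exact Eventually.of_forall fun ω h => absurd h hk
    rw [← hdis, ← Measure.compProd_const]
    apply Measure.compProd_congr
    filter_upwards [hall] with ω hω
    rw [ProbabilityTheory.Kernel.const_apply]
    exact eq_haar _ hω
end
end

section
/- T is uniquely ergodic (there is exactly one T-invariant Borel probability measure on Ω) if and only if the product measure γ = γ₀ × m_{𝕋¹} is ergodic for T. -/
noncomputable section
open MeasureTheory Filter

/-- Let `T₀ : Ω₀ → Ω₀` be a uniquely ergodic continuous map of a compact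
metric space, with unique invariant Borel probability measure `γ₀`, let `g : Ω₀ → 𝕋¹` be
Borel measurable and `T(ω₀,ζ) = (T₀ω₀, ζ + g(ω₀))` the skew product on `Ω = Ω₀ × 𝕋¹`.
Then `T` is uniquely ergodic if and only if the product measure `γ = γ₀ × m_{𝕋¹}` is
ergodic for `T`. -/
theorem stmt14
    {Ω₀ : Type*} [MetricSpace Ω₀] [CompactSpace Ω₀] [MeasurableSpace Ω₀] [BorelSpace Ω₀]
    (T₀ : Ω₀ → Ω₀) (hT₀ : Continuous T₀)
    (γ₀ : Measure Ω₀) (hprob : IsProbabilityMeasure γ₀) (hinv : γ₀.map T₀ = γ₀)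
    (huniq : ∀ μ : Measure Ω₀, IsProbabilityMeasure μ → μ.map T₀ = μ → μ = γ₀)
    (g : Ω₀ → T1) (hg : Measurable g) :
    (∃! μ : Measure (Ω₀ × T1), IsProbabilityMeasure μ ∧
        μ.map (fun ω : Ω₀ × T1 => (T₀ ω.1, ω.2 + g ω.1)) = μ) ↔
      Ergodic (fun ω : Ω₀ × T1 => (T₀ ω.1, ω.2 + g ω.1)) (γ₀.prod volume) := by
  have hvol : IsProbabilityMeasure (volume : Measure T1) := ⟨by
    rw [AddCircle.measure_univ]; simp⟩
  have hTm : Measurable (fun ω : Ω₀ × T1 => (T₀ ω.1, ω.2 + g ω.1)) := by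
    have := hT₀.measurable
    fun_prop
  have hγ : MeasurePreserving (fun ω : Ω₀ × T1 => (T₀ ω.1, ω.2 + g ω.1))
      (γ₀.prod volume) (γ₀.prod volume) := by
    refine MeasurePreserving.skew_product (f := T₀) (g := fun x z => z + g x)
      ⟨hT₀.measurable, hinv⟩ (by fun_prop) (ae_of_all _ fun x => ?_)
    exact (measurePreserving_add_right volume (g x)).map_eq
  constructor
  · rintro ⟨μ, -, hu⟩
    have hγu : ∀ ν : Measure (Ω₀ × T1), MeasurePreserving
        (fun ω : Ω₀ × T1 => (T₀ ω.1, ω.2 + g ω.1)) ν ν → IsProbabilityMeasure ν →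
        ν = γ₀.prod volume := fun ν h1 h2 =>
      (hu ν ⟨h2, h1.map_eq⟩).trans (hu _ ⟨inferInstance, hγ.map_eq⟩).symm
    apply Ergodic.of_mem_extremePoints
    rw [mem_extremePoints_iff_left]
    refine ⟨⟨hγ, inferInstance⟩, ?_⟩
    rintro ν₁ ⟨h1, h2⟩ ν₂ _ _
    exact hγu ν₁ h1 h2
  · intro herg
    refine ⟨γ₀.prod volume, ⟨inferInstance, hγ.map_eq⟩, ?_⟩
    rintro μ ⟨hμp, hμT⟩
    -- the marginal of μ is γ₀
    have hfst : μ.map Prod.fst = γ₀ := by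
      apply huniq
      · exact Measure.isProbabilityMeasure_map measurable_fst.aemeasurable
      · conv_rhs => rw [← hμT]
        rw [Measure.map_map hT₀.measurable measurable_fst, Measure.map_map measurable_fst hTm]
        rfl
    have hRm : Measurable (fun p : T1 × (Ω₀ × T1) => (p.2.1, p.2.2 + p.1)) := by fun_prop
    -- averaging μ over all rotations gives the product measure
    have havg : (Measure.prod (volume : Measure T1) μ).map
        (fun p : T1 × (Ω₀ × T1) => (p.2.1, p.2.2 + p.1)) = γ₀.prod volume := by
      have h1 : MeasurePreserving (fun q : (Ω₀ × T1) × T1 => (q.1, q.1.2 + q.2))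
          (μ.prod volume) (μ.prod volume) := by
        refine MeasurePreserving.skew_product (f := id) (g := fun ω t => ω.2 + t)
          (MeasurePreserving.id μ) (by fun_prop) (ae_of_all _ fun ω => ?_)
        exact (measurePreserving_add_left volume ω.2).map_eq
      have h2 : MeasurePreserving (Prod.map Prod.fst id : (Ω₀ × T1) × T1 → Ω₀ × T1)
          (μ.prod volume) (γ₀.prod volume) :=
        MeasurePreserving.prod ⟨measurable_fst, hfst⟩ (MeasurePreserving.id _)
      exact ((h2.comp h1).comp Measure.measurePreserving_swap).map_eq
    have hΦm : Measurable
        (fun p : T1 × (Ω₀ × T1) => (p.1, (p.2.1, p.2.2 + p.1))) := by fun_prop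
    have hΦ : (Measure.prod (volume : Measure T1) μ).map
        (fun p : T1 × (Ω₀ × T1) => (p.1, (p.2.1, p.2.2 + p.1))) =
        (volume : Measure T1).prod (γ₀.prod volume) := by
      have : IsProbabilityMeasure ((Measure.prod (volume : Measure T1) μ).map
        (fun p : T1 × (Ω₀ × T1) => (p.1, (p.2.1, p.2.2 + p.1)))) :=
        Measure.isProbabilityMeasure_map hΦm.aemeasurable
      apply Measure.ext_prod
      intro A E hA hE
      -- partial average over A
      let ν : Measure (Ω₀ × T1) := (Measure.prod ((volume : Measure T1).restrict A) μ).map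
        (fun p : T1 × (Ω₀ × T1) => (p.2.1, p.2.2 + p.1))
      have hνT : MeasurePreserving (fun ω : Ω₀ × T1 => (T₀ ω.1, ω.2 + g ω.1)) ν ν := by
        refine ⟨hTm, ?_⟩
        have h1 : MeasurePreserving (Prod.map id (fun ω : Ω₀ × T1 => (T₀ ω.1, ω.2 + g ω.1)))
          (Measure.prod ((volume : Measure T1).restrict A) μ)
          (Measure.prod ((volume : Measure T1).restrict A) μ) :=
          MeasurePreserving.prod (MeasurePreserving.id _) ⟨hTm, hμT⟩
        change Measure.map _ (Measure.map _ _) = Measure.map _ _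
        conv_rhs => rw [← h1.map_eq]
        rw [Measure.map_map hTm hRm, Measure.map_map hRm h1.measurable]
        congr 1
        funext p
        simp [add_right_comm]
      have hle : ν ≤ γ₀.prod volume := by
        rw [← havg]
        refine Measure.map_mono ?_ hRm
        have h := Measure.prod_restrict (μ := (volume : Measure T1)) (ν := μ) A Set.univ
        rw [Measure.restrict_univ] at h
        rw [h]
        exact Measure.restrict_le_self
      have : IsFiniteMeasure ν := ⟨(hle Set.univ).trans_lt (measure_lt_top _ _)⟩
      obtain ⟨c, hc⟩ := herg.eq_smul_of_absolutelyContinuous hνT hle.absolutelyContinuous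
      have hνu : ν Set.univ = volume A := by
        simp only [ν]
        rw [Measure.map_apply hRm MeasurableSet.univ, Set.preimage_univ, ← Set.univ_prod_univ,
          Measure.prod_prod]
        simp
      have hcA : c = volume A := by
        rw [← hνu, hc]; simp
      rw [Measure.prod_prod, Measure.map_apply hΦm (hA.prod hE)]
      have hνE : ν E = volume A * (γ₀.prod volume) E := by rw [hc, hcA]; simp
      rw [← hνE]
      simp only [ν]
      have h := Measure.prod_restrict (μ := (volume : Measure T1)) (ν := μ) A Set.univ
      rw [Measure.restrict_univ] at h
      rw [Measure.map_apply hRm hE, h, Measure.restrict_apply (hRm hE)]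
      congr 1
      ext p
      simp [and_comm]
    have hΨ : MeasurePreserving
        (fun p : T1 × (Ω₀ × T1) => (p.1, (p.2.1, p.2.2 + -p.1)))
        ((volume : Measure T1).prod (γ₀.prod volume))
        ((volume : Measure T1).prod (γ₀.prod volume)) := by
      refine MeasurePreserving.skew_product (f := id)
        (g := fun (t : T1) (ω : Ω₀ × T1) => ((ω.1, ω.2 + -t) : Ω₀ × T1))
        (MeasurePreserving.id _) (by fun_prop) (ae_of_all _ fun t => ?_)
      exact ((MeasurePreserving.id γ₀).prod (measurePreserving_add_right volume (-t))).map_eq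
    have hprod : Measure.prod (volume : Measure T1) μ =
        (volume : Measure T1).prod (γ₀.prod volume) := by
      rw [← hΨ.map_eq, ← hΦ, Measure.map_map hΨ.measurable hΦm]
      conv_lhs => rw [← Measure.map_id (μ := Measure.prod (volume : Measure T1) μ)]
      congr 1
      funext p
      simp
    have := congrArg (Measure.map Prod.snd) hprod
    simpa [Measure.map_snd_prod] using this
end
end
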